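/- Let U: ℝ^d → ℝ be continuously differentiable with ∇U bounded and Lipschitz continuous, let T > 0, let α ∈ [0,1], and for ε > 0 let φ_ε denote the density of the normal distribution with mean 0 and variance ε. For a smooth compactly supported function f: ℝ^d → ℝ define L₁^ε f(x) := (1/(d ε)) Σ_{i=1}^d ∫_ℝ (f(x + z e_i) − f(x)) · exp(−(U(x + z e_i) − U(x))₊/T) φ_ε(z) dz, L₂^ε f(x) := (1/(d ε)) Σ_{i=1}^d ∫_ℝ (f(x + z e_i) − f(x)) · exp((U(x) − U(x + z e_i))₊/T) φ_ε(z) dz, and the Langevin generator G f(x) := −(1/(2Td)) Σ_{i=1}^d ∂_{x_i}U(x) ∂_{x_i}f(x) + (1/(2d)) Σ_{i=1}^d ∂²_{x_i}f(x). Then for every smooth compactly supported f, sup_{x ∈ ℝ^d} |α L₁^ε f(x) + (1−α) L₂^ε f(x) − G f(x)| → 0 as ε → 0. -/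

import Mathlib

/-!
Since `y₊ = (y + |y|) / 2`, both acceptance rates have the form `exp (a δ + b |δ|)`, where `δ` is
the increment of `U` and `a = -1 / (2T)`; they differ only in `b = ∓1 / (2T)`. Along a unit vector
`e` the integrand therefore expands, up to an error of order `|z|³ exp (M |z|)` uniform in `x`, as
`∂ₑf z + (∂ₑ²f / 2 + a ∂ₑU ∂ₑf) z² + b |∂ₑU| ∂ₑf z |z|`. The terms in `z` and `z |z|` are odd, so
the Gaussian integral kills them: `b` disappears in the limit, and what remains is the generator,
with an error of order `√ε`.
-/

open MeasureTheory

/-- Density of the one-dimensional normal distribution with mean `0` and variance `ε`. -/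
noncomputable def gaussDensity (ε z : ℝ) : ℝ :=
  (Real.sqrt (2 * Real.pi * ε))⁻¹ * Real.exp (-z ^ 2 / (2 * ε))

open ProbabilityTheory

section Taylor

variable {E : Type*} [NormedAddCommGroup E] [NormedSpace ℝ E] {g g' g'' : ℝ → E} {C : ℝ}

lemma norm_le_mul_abs_pow_succ_of_norm_deriv_le {n : ℕ} (hg : ∀ t, HasDerivAt g (g' t) t)
    (h0 : g 0 = 0) (hC : ∀ t, ‖g' t‖ ≤ C * |t| ^ n) (z : ℝ) : ‖g z‖ ≤ C * |z| ^ (n + 1) := by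
  have hC0 : 0 ≤ C := by simpa using (norm_nonneg _).trans (hC 1)
  have hbound : ∀ t ∈ Set.uIcc 0 z, ‖g' t‖ ≤ C * |z| ^ n := fun t ht ↦ by
    have htz : |t| ≤ |z| := by simpa using Set.abs_sub_left_of_mem_uIcc ht
    exact (hC t).trans (by gcongr)
  have hmv := (convex_uIcc 0 z).norm_image_sub_le_of_norm_hasDerivWithin_le
    (fun t _ ↦ (hg t).hasDerivWithinAt) hbound Set.left_mem_uIcc Set.right_mem_uIcc
  simpa [h0, pow_succ, mul_assoc] using hmv

lemma norm_sub_le_mul_abs_of_norm_deriv_le (hg : ∀ t, HasDerivAt g (g' t) t)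
    (hC : ∀ t, ‖g' t‖ ≤ C) (z : ℝ) : ‖g z - g 0‖ ≤ C * |z| := by
  simpa using norm_le_mul_abs_pow_succ_of_norm_deriv_le (n := 0)
    (fun t ↦ (hg t).sub_const (g 0)) (sub_self _) (by simpa using hC) z

lemma norm_sub_sub_smul_deriv_le (hg : ∀ t, HasDerivAt g (g' t) t)
    (hC : ∀ t, ‖g' t - g' 0‖ ≤ C * |t|) (z : ℝ) :
    ‖g z - g 0 - z • g' 0‖ ≤ C * |z| ^ 2 := by
  refine norm_le_mul_abs_pow_succ_of_norm_deriv_le (n := 1)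
    (g := fun t ↦ g t - g 0 - t • g' 0) (fun t ↦ ?_) (by simp) (by simpa using hC) z
  simpa using ((hg t).sub_const (g 0)).fun_sub ((hasDerivAt_id t).smul_const (g' 0))

lemma norm_sub_sub_smul_deriv_sub_smul_deriv_two_le (hg : ∀ t, HasDerivAt g (g' t) t)
    (hg' : ∀ t, HasDerivAt g' (g'' t) t) (hC : ∀ t, ‖g'' t - g'' 0‖ ≤ C * |t|) (z : ℝ) :
    ‖g z - g 0 - z • g' 0 - (z ^ 2 / 2) • g'' 0‖ ≤ C * |z| ^ 3 := by
  refine norm_le_mul_abs_pow_succ_of_norm_deriv_le (n := 2)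
    (g := fun t ↦ g t - g 0 - t • g' 0 - (t ^ 2 / 2) • g'' 0) (fun t ↦ ?_) (by simp)
    (norm_sub_sub_smul_deriv_le hg' hC) z
  have hsq : HasDerivAt (fun s : ℝ ↦ s ^ 2 / 2) t t := by
    simpa using (hasDerivAt_pow 2 t).div_const 2
  simpa using (((hg t).sub_const (g 0)).fun_sub ((hasDerivAt_id t).smul_const (g' 0))).fun_sub
    (hsq.smul_const (g'' 0))

end Taylor

section Line

variable {V W : Type*} [NormedAddCommGroup V] [NormedSpace ℝ V] [NormedAddCommGroup W]
  [NormedSpace ℝ W] {f : V → W}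

lemma hasDerivAt_comp_add_smul (hf : Differentiable ℝ f) (x e : V) (t : ℝ) :
    HasDerivAt (fun s : ℝ ↦ f (x + s • e)) (fderiv ℝ f (x + t • e) e) t := by
  have hline : HasDerivAt (fun s : ℝ ↦ x + s • e) e t := by
    simpa using ((hasDerivAt_id t).smul_const e).const_add x
  exact (hf _).hasFDerivAt.comp_hasDerivAt t hline

lemma hasDerivAt_iteratedFDeriv_comp_add_smul {n : ℕ} (hf : ContDiff ℝ (n + 1) f) (x e : V)
    (t : ℝ) :
    HasDerivAt (fun s : ℝ ↦ iteratedFDeriv ℝ n f (x + s • e) fun _ ↦ e)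
      (iteratedFDeriv ℝ (n + 1) f (x + t • e) fun _ ↦ e) t := by
  have hdiff : Differentiable ℝ (iteratedFDeriv ℝ n f) :=
    hf.differentiable_iteratedFDeriv (by exact_mod_cast n.lt_succ_self)
  exact (ContinuousMultilinearMap.apply ℝ (fun _ : Fin n ↦ V) W fun _ ↦ e).hasFDerivAt
    |>.comp_hasDerivAt t (hasDerivAt_comp_add_smul hdiff x e t)

lemma norm_iteratedFDeriv_apply_const_le {n : ℕ} {B : ℝ} {x e : V} (he : ‖e‖ = 1)
    (hB : ‖iteratedFDeriv ℝ n f x‖ ≤ B) : ‖iteratedFDeriv ℝ n f x fun _ ↦ e‖ ≤ B := by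
  simpa [he] using ((iteratedFDeriv ℝ n f x).le_opNorm fun _ ↦ e).trans
    (mul_le_mul_of_nonneg_right hB (by positivity))

lemma fderiv_fderiv_apply_eq_iteratedFDeriv_two (hf : ContDiff ℝ 2 f) (x e : V) :
    fderiv ℝ (fun y ↦ fderiv ℝ f y e) x e = iteratedFDeriv ℝ 2 f x fun _ ↦ e := by
  have hdiff : Differentiable ℝ (fderiv ℝ f) :=
    (hf.fderiv_right (m := 1) (by norm_num)).differentiable one_ne_zero
  simp [iteratedFDeriv_two_apply, fderiv_clm_apply (hdiff x) (differentiableAt_const e)]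

lemma exists_norm_iteratedFDeriv_le_of_hasCompactSupport {m : ℕ} (hf : ContDiff ℝ m f)
    (hsupp : HasCompactSupport f) : ∃ B, ∀ n ≤ m, ∀ x, ‖iteratedFDeriv ℝ n f x‖ ≤ B := by
  have hbdd (n : Fin (m + 1)) : ∃ B, ∀ x, ‖iteratedFDeriv ℝ n f x‖ ≤ B :=
    (hf.continuous_iteratedFDeriv (by exact_mod_cast n.is_le)).bounded_above_of_compact_support
      (hsupp.iteratedFDeriv n)
  choose C hC using hbdd
  obtain ⟨B, hB⟩ := (Set.finite_range C).bddAbove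
  exact ⟨B, fun n hn x ↦ (hC ⟨n, by lia⟩ x).trans (hB ⟨_, rfl⟩)⟩

end Line

section Gaussian

lemma gaussDensity_eq_gaussianPDFReal {ε : ℝ} (hε : 0 ≤ ε) :
    gaussDensity ε = gaussianPDFReal 0 ⟨ε, hε⟩ := by
  ext z
  simp only [gaussDensity, gaussianPDFReal, sub_zero]
  rfl

lemma integral_mul_gaussDensity (F : ℝ → ℝ) {ε : ℝ} (hε : 0 < ε) :
    ∫ z, F z * gaussDensity ε z = ∫ w, F (√ε * w) ∂gaussianReal 0 1 := by
  have hmap : (gaussianReal 0 1).map (√ε * ·) = gaussianReal 0 ⟨ε, hε.le⟩ := by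
    rw [gaussianReal_map_const_mul, mul_zero, mul_one]
    congr
    exact Real.sq_sqrt hε.le
  have hemb : MeasurableEmbedding (√ε * ·) :=
    (Homeomorph.mulLeft₀ _ (Real.sqrt_ne_zero'.2 hε)).measurableEmbedding
  rw [← hemb.integral_map F, hmap,
    integral_gaussianReal_eq_integral_smul (Subtype.coe_ne_coe.1 hε.ne'),
    gaussDensity_eq_gaussianPDFReal hε.le]
  simp only [smul_eq_mul, mul_comm]

lemma integral_gaussianReal_eq_zero_of_odd {E : Type*} [NormedAddCommGroup E] [NormedSpace ℝ E]
    {F : ℝ → E} (hF : F.Odd) (v : NNReal) : ∫ w, F w ∂gaussianReal 0 v = 0 := by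
  have hmap : (gaussianReal 0 v).map Neg.neg = gaussianReal 0 v := by
    simpa using gaussianReal_map_neg (μ := 0) (v := v)
  have : IsAddTorsionFree E := .of_isTorsionFree ℝ E
  rw [← self_eq_neg]
  conv_lhs => rw [← hmap, measurableEmbedding_neg.integral_map]
  simp only [hF _, integral_neg]

lemma integrable_abs_pow_mul_exp_mul_abs_gaussianReal {M : ℝ} (hM : 0 ≤ M) (n : ℕ) (μ : ℝ)
    (v : NNReal) : Integrable (fun w ↦ |w| ^ n * Real.exp (M * |w|)) (gaussianReal μ v) := by
  simpa using integrable_pow_abs_mul_exp_add_of_integrable_exp_mul (X := id) (v := 0) (t := M + 1)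
    (integrable_exp_mul_gaussianReal _) (integrable_exp_mul_gaussianReal _) hM
    (by rw [abs_of_nonneg (by positivity)]; linarith) n

lemma integral_sq_gaussianReal_zero (v : NNReal) : ∫ w, w ^ 2 ∂gaussianReal 0 v = v := by
  simpa [variance_eq_integral measurable_id.aemeasurable] using
    variance_id_gaussianReal (μ := 0) (v := v)

lemma integrable_pow_gaussianReal (n : ℕ) (μ : ℝ) (v : NNReal) :
    Integrable (fun w ↦ w ^ n) (gaussianReal μ v) := by
  refine Integrable.mono' (integrable_abs_pow_mul_exp_mul_abs_gaussianReal le_rfl n μ v)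
    (by fun_prop) (.of_forall fun w ↦ ?_)
  simp

lemma integrable_mul_abs_gaussianReal (μ : ℝ) (v : NNReal) :
    Integrable (fun w ↦ w * |w|) (gaussianReal μ v) := by
  refine Integrable.mono' (integrable_pow_gaussianReal 2 μ v) (by fun_prop)
    (.of_forall fun w ↦ ?_)
  simp [sq]

lemma integrable_linear_add_sq_add_mul_abs_gaussianReal (p q r : ℝ) (μ : ℝ) (v : NNReal) :
    Integrable (fun w ↦ p * w + q * w ^ 2 + r * (w * |w|)) (gaussianReal μ v) := by
  have hlin : Integrable (fun w ↦ w) (gaussianReal μ v) := by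
    simpa using integrable_pow_gaussianReal 1 μ v
  exact ((hlin.const_mul p).add ((integrable_pow_gaussianReal 2 μ v).const_mul q)).add
    ((integrable_mul_abs_gaussianReal μ v).const_mul r)

lemma integral_linear_add_sq_add_mul_abs_gaussianReal_zero (p q r : ℝ) (v : NNReal) :
    ∫ w, (p * w + q * w ^ 2 + r * (w * |w|)) ∂gaussianReal 0 v = q * v := by
  have hsplit (w : ℝ) : p * w + q * w ^ 2 + r * (w * |w|) =
      (p * w + 0 * w ^ 2 + r * (w * |w|)) + q * w ^ 2 := by ring
  have hodd : Function.Odd fun w : ℝ ↦ p * w + 0 * w ^ 2 + r * (w * |w|) := fun w ↦ by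
    simp only [abs_neg]
    ring
  simp_rw [hsplit]
  rw [integral_add (integrable_linear_add_sq_add_mul_abs_gaussianReal p 0 r 0 v)
    ((integrable_pow_gaussianReal 2 0 v).const_mul q), integral_gaussianReal_eq_zero_of_odd hodd,
    integral_const_mul, integral_sq_gaussianReal_zero, zero_add]

variable {F : ℝ → ℝ} {p q r C M ε : ℝ}

lemma abs_sqrt_rescaling_sub_le (hM : 0 ≤ M)
    (hF : ∀ z, |F z - (p * z + q * z ^ 2 + r * (z * |z|))| ≤ C * (|z| ^ 3 * Real.exp (M * |z|)))
    (hε : 0 ≤ ε) (hε₁ : ε ≤ 1) (w : ℝ) :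
    |F (√ε * w) - (p * √ε * w + q * ε * w ^ 2 + r * ε * (w * |w|))| ≤
      C * (ε * √ε) * (|w| ^ 3 * Real.exp (M * |w|)) := by
  have hsq : √ε ^ 2 = ε := Real.sq_sqrt hε
  have habs : |√ε * w| = √ε * |w| := by rw [abs_mul, abs_of_nonneg ε.sqrt_nonneg]
  have hC : 0 ≤ C := nonneg_of_mul_nonneg_left ((abs_nonneg _).trans (hF 1)) (by positivity)
  calc |F (√ε * w) - (p * √ε * w + q * ε * w ^ 2 + r * ε * (w * |w|))|
      = |F (√ε * w) - (p * (√ε * w) + q * (√ε * w) ^ 2 + r * (√ε * w * |√ε * w|))| := by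
        rw [habs]
        congr 2
        linear_combination (-q * w ^ 2 - r * (w * |w|)) * hsq
    _ ≤ C * ((√ε * |w|) ^ 3 * Real.exp (M * (√ε * |w|))) := by simpa only [habs] using hF (√ε * w)
    _ ≤ C * ((√ε * |w|) ^ 3 * Real.exp (M * |w|)) := by
        gcongr
        exact mul_le_of_le_one_left (abs_nonneg w) (Real.sqrt_le_one.2 hε₁)
    _ = C * (ε * √ε) * (|w| ^ 3 * Real.exp (M * |w|)) := by
        linear_combination C * √ε * |w| ^ 3 * Real.exp (M * |w|) * hsq

lemma abs_one_div_mul_integral_gaussDensity_sub_le (hFc : Continuous F) (hM : 0 ≤ M)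
    (hF : ∀ z, |F z - (p * z + q * z ^ 2 + r * (z * |z|))| ≤ C * (|z| ^ 3 * Real.exp (M * |z|)))
    (hε : 0 < ε) (hε₁ : ε ≤ 1) :
    |1 / ε * (∫ z, F z * gaussDensity ε z) - q| ≤
      C * (∫ w, |w| ^ 3 * Real.exp (M * |w|) ∂gaussianReal 0 1) * √ε := by
  set γ := gaussianReal 0 1
  set P : ℝ → ℝ := fun w ↦ p * √ε * w + q * ε * w ^ 2 + r * ε * (w * |w|)
  have hPint : Integrable P γ := integrable_linear_add_sq_add_mul_abs_gaussianReal _ _ _ 0 1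
  have hP : ∫ w, P w ∂γ = q * ε := by
    simpa using integral_linear_add_sq_add_mul_abs_gaussianReal_zero (p * √ε) (q * ε) (r * ε) 1
  have hR (w : ℝ) : ‖F (√ε * w) - P w‖ ≤ C * (ε * √ε) * (|w| ^ 3 * Real.exp (M * |w|)) :=
    abs_sqrt_rescaling_sub_le hM hF hε.le hε₁ w
  have hdom := (integrable_abs_pow_mul_exp_mul_abs_gaussianReal hM 3 0 1).const_mul (C * (ε * √ε))
  have hRint : Integrable (fun w ↦ F (√ε * w) - P w) γ :=
    hdom.mono' (by fun_prop) (.of_forall hR)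
  have hsplit : ∫ w, F (√ε * w) ∂γ = ∫ w, (F (√ε * w) - P w) ∂γ + q * ε := by
    rw [← hP, ← integral_add hRint hPint]
    simp only [sub_add_cancel]
  have hle : |∫ w, (F (√ε * w) - P w) ∂γ| ≤
      C * (ε * √ε) * ∫ w, |w| ^ 3 * Real.exp (M * |w|) ∂γ := by
    rw [← integral_const_mul, ← Real.norm_eq_abs]
    exact norm_integral_le_of_norm_le hdom (.of_forall hR)
  rw [integral_mul_gaussDensity F hε, hsplit]
  generalize (∫ w, |w| ^ 3 * Real.exp (M * |w|) ∂γ) = J at hle ⊢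
  generalize (∫ w, (F (√ε * w) - P w) ∂γ) = R at hle ⊢
  calc |1 / ε * (R + q * ε) - q| = |R| / ε := by
        rw [← abs_of_pos hε, ← abs_div, abs_of_pos hε]
        congr 1
        field_simp
        ring
    _ ≤ C * (ε * √ε) * J / ε := by gcongr
    _ = C * J * √ε := by field_simp

end Gaussian

section Rate

/-- Logarithm of the acceptance rate of a move that changes the energy by `δ`. Detailed balance with
respect to `exp (-U / T)` amounts to `a = -1 / (2T)` and leaves `b` free; the Metropolis-Hastings
rates are `b = -1 / (2T)` and `b = 1 / (2T)`. -/
noncomputable def logRate (a b δ : ℝ) : ℝ := a * δ + b * |δ|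

lemma continuous_logRate (a b : ℝ) : Continuous (logRate a b) := by
  unfold logRate
  fun_prop

lemma abs_logRate_sub_logRate_le (a b δ η : ℝ) :
    |logRate a b δ - logRate a b η| ≤ (|a| + |b|) * |δ - η| :=
  calc |logRate a b δ - logRate a b η| = |a * (δ - η) + b * (|δ| - |η|)| := by
        unfold logRate
        congr 1
        ring
    _ ≤ |a| * |δ - η| + |b| * |(|δ| - |η|)| := by
        simpa only [abs_mul] using abs_add_le (a * (δ - η)) (b * (|δ| - |η|))
    _ ≤ |a| * |δ - η| + |b| * |δ - η| := by
        gcongr _ + _ * ?_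
        exact abs_abs_sub_abs_le δ η
    _ = (|a| + |b|) * |δ - η| := by ring

lemma abs_logRate_le (a b δ : ℝ) : |logRate a b δ| ≤ (|a| + |b|) * |δ| := by
  simpa [logRate] using abs_logRate_sub_logRate_le a b δ 0

lemma max_zero_eq_add_abs_div_two (y : ℝ) : max y 0 = (y + |y|) / 2 := by
  rcases le_total 0 y with hy | hy
  · rw [max_eq_left hy, abs_of_nonneg hy, add_self_div_two]
  · rw [max_eq_right hy, abs_of_nonpos hy, add_neg_cancel, zero_div]

lemma logRate_metropolis_first (T u v : ℝ) :
    logRate (-(1 / (2 * T))) (-(1 / (2 * T))) (v - u) = -(max (v - u) 0) / T := by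
  rw [logRate, max_zero_eq_add_abs_div_two]
  ring

lemma logRate_metropolis_second (T u v : ℝ) :
    logRate (-(1 / (2 * T))) (1 / (2 * T)) (v - u) = max (u - v) 0 / T := by
  rw [logRate, max_zero_eq_add_abs_div_two, abs_sub_comm]
  ring

end Rate

section Expansion

lemma abs_exp_sub_one_sub_id_le_sq_mul_exp_abs (s : ℝ) :
    |Real.exp s - 1 - s| ≤ s ^ 2 * Real.exp |s| := by
  have h := Complex.norm_exp_sub_sum_le_norm_mul_exp (s : ℂ) 2
  simp only [Finset.sum_range_succ, Finset.sum_range_zero, Complex.norm_real, Real.norm_eq_abs,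
    sq_abs] at h
  norm_num at h
  rw [← sub_sub] at h
  exact_mod_cast h

lemma abs_exp_sub_one_sub_le {s s₀ z M N : ℝ} (hs : |s| ≤ M * |z|)
    (hss₀ : |s - s₀| ≤ N * |z| ^ 2) :
    |Real.exp s - 1 - s₀| ≤ (M ^ 2 + N) * |z| ^ 2 * Real.exp (M * |z|) := by
  have hone : 1 ≤ Real.exp (M * |z|) := Real.one_le_exp ((abs_nonneg s).trans hs)
  calc |Real.exp s - 1 - s₀| ≤ |Real.exp s - 1 - s| + |s - s₀| := by
        simpa using abs_add_le (Real.exp s - 1 - s) (s - s₀)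
    _ ≤ |s| ^ 2 * Real.exp |s| + |s - s₀| := by
        gcongr
        simpa using abs_exp_sub_one_sub_id_le_sq_mul_exp_abs s
    _ ≤ (M * |z|) ^ 2 * Real.exp (M * |z|) + N * |z| ^ 2 * Real.exp (M * |z|) := by
        gcongr
        exact hss₀.trans (le_mul_of_one_le_right ((abs_nonneg _).trans hss₀) hone)
    _ = (M ^ 2 + N) * |z| ^ 2 * Real.exp (M * |z|) := by ring

variable {B M N : ℝ}

lemma abs_mul_exp_sub_taylor_le {D p c s s₀ z : ℝ} (hD : |D| ≤ B * |z|)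
    (hD₁ : |D - z * p| ≤ B * |z| ^ 2) (hD₂ : |D - z * p - z ^ 2 / 2 * c| ≤ B * |z| ^ 3)
    (hs : |s| ≤ M * |z|) (hs₀ : |s₀| ≤ M * |z|) (hss₀ : |s - s₀| ≤ N * |z| ^ 2) :
    |D * Real.exp s - (z * p + z ^ 2 / 2 * c + z * p * s₀)| ≤
      B * (1 + M + M ^ 2 + N) * (|z| ^ 3 * Real.exp (M * |z|)) := by
  have hone : 1 ≤ Real.exp (M * |z|) := Real.one_le_exp ((abs_nonneg s).trans hs)
  have hcubic {y : ℝ} (hy : 0 ≤ y) : y ≤ y * Real.exp (M * |z|) := le_mul_of_one_le_right hy hone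
  have hrate : |D * (Real.exp s - 1 - s₀)| ≤
      B * |z| * ((M ^ 2 + N) * |z| ^ 2 * Real.exp (M * |z|)) := by
    rw [abs_mul]
    exact mul_le_mul hD (abs_exp_sub_one_sub_le hs hss₀) (abs_nonneg _) ((abs_nonneg _).trans hD)
  have hcross : |(D - z * p) * s₀| ≤ B * |z| ^ 2 * (M * |z|) := by
    rw [abs_mul]
    exact mul_le_mul hD₁ hs₀ (abs_nonneg _) ((abs_nonneg _).trans hD₁)
  calc |D * Real.exp s - (z * p + z ^ 2 / 2 * c + z * p * s₀)|
      = |D * (Real.exp s - 1 - s₀) + (D - z * p - z ^ 2 / 2 * c) + (D - z * p) * s₀| := by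
        congr 1
        ring
    _ ≤ B * |z| * ((M ^ 2 + N) * |z| ^ 2 * Real.exp (M * |z|)) + B * |z| ^ 3 * Real.exp (M * |z|)
          + B * |z| ^ 2 * (M * |z|) * Real.exp (M * |z|) :=
        (abs_add_three _ _ _).trans <| add_le_add_three hrate
          (hD₂.trans (hcubic ((abs_nonneg _).trans hD₂)))
          (hcross.trans (hcubic ((abs_nonneg _).trans hcross)))
    _ = B * (1 + M + M ^ 2 + N) * (|z| ^ 3 * Real.exp (M * |z|)) := by ring

variable {g g' g'' u u' : ℝ → ℝ} {K L : ℝ}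

lemma abs_sub_mul_exp_logRate_sub_le (a b : ℝ) (hg : ∀ t, HasDerivAt g (g' t) t)
    (hg' : ∀ t, HasDerivAt g' (g'' t) t) (hu : ∀ t, HasDerivAt u (u' t) t)
    (hgB : ∀ t, |g' t| ≤ B) (hgB' : ∀ t, |g'' t| ≤ B) (hgB'' : ∀ t, |g'' t - g'' 0| ≤ B * |t|)
    (huK : ∀ t, |u' t| ≤ K) (huL : ∀ t, |u' t - u' 0| ≤ L * |t|) (z : ℝ) :
    |(g z - g 0) * Real.exp (logRate a b (u z - u 0)) - (g' 0 * z +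
        (a * (u' 0 * g' 0) + g'' 0 / 2) * z ^ 2 + b * |u' 0| * g' 0 * (z * |z|))| ≤
      B * (1 + (|a| + |b|) * K + ((|a| + |b|) * K) ^ 2 + (|a| + |b|) * L) *
        (|z| ^ 3 * Real.exp ((|a| + |b|) * K * |z|)) := by
  have hincr : |logRate a b (u z - u 0)| ≤ (|a| + |b|) * K * |z| := by
    rw [mul_assoc]
    exact (abs_logRate_le a b _).trans
      (by gcongr; exact norm_sub_le_mul_abs_of_norm_deriv_le hu huK z)
  have hlin : |logRate a b (z * u' 0)| ≤ (|a| + |b|) * K * |z| := by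
    rw [mul_assoc, mul_comm K]
    exact (abs_logRate_le a b _).trans (by rw [abs_mul]; gcongr; exact huK 0)
  have hdiff : |logRate a b (u z - u 0) - logRate a b (z * u' 0)| ≤
      (|a| + |b|) * L * |z| ^ 2 := by
    rw [mul_assoc]
    exact (abs_logRate_sub_logRate_le a b _ _).trans
      (by gcongr; exact norm_sub_sub_smul_deriv_le hu huL z)
  convert abs_mul_exp_sub_taylor_le (norm_sub_le_mul_abs_of_norm_deriv_le hg hgB z)
    (norm_sub_sub_smul_deriv_le hg (norm_sub_le_mul_abs_of_norm_deriv_le hg' hgB') z)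
    (norm_sub_sub_smul_deriv_sub_smul_deriv_two_le hg hg' hgB'' z) hincr hlin hdiff using 3
  rw [logRate, abs_mul]
  ring

end Expansion

section Generators

section Directional

variable {V : Type*} [NormedAddCommGroup V] [NormedSpace ℝ V]

/-- Rescaled generator, for moves along `e`, of the jump process on `V` with Gaussian proposals of
variance `ε` and acceptance rate `exp ∘ logRate a b`. -/
noncomputable def directionalJumpGenerator (a b : ℝ) (U f : V → ℝ) (ε : ℝ) (e x : V) : ℝ :=
  1 / ε * ∫ z : ℝ, (f (x + z • e) - f x) * Real.exp (logRate a b (U (x + z • e) - U x)) *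
    gaussDensity ε z

/-- Contribution of the direction `e` to the generator of `dX = a ∇U(X) dt + dW`. -/
noncomputable def directionalDiffusionGenerator (a : ℝ) (U f : V → ℝ) (e x : V) : ℝ :=
  a * (fderiv ℝ U x e * fderiv ℝ f x e) + fderiv ℝ (fun y ↦ fderiv ℝ f y e) x e / 2

theorem exists_abs_directionalJumpGenerator_sub_le (a b : ℝ) {U : V → ℝ}
    (hU : Differentiable ℝ U) {K : ℝ} (hbd : ∀ x, ‖fderiv ℝ U x‖ ≤ K) {L : NNReal}
    (hlip : LipschitzWith L (fderiv ℝ U)) {f : V → ℝ} (hf : ContDiff ℝ 3 f) {B : ℝ}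
    (hB : ∀ n ∈ Finset.Icc 1 3, ∀ x, ‖iteratedFDeriv ℝ n f x‖ ≤ B) :
    ∃ C, ∀ e : V, ‖e‖ = 1 → ∀ ε, 0 < ε → ε ≤ 1 → ∀ x,
      |directionalJumpGenerator a b U f ε e x - directionalDiffusionGenerator a U f e x| ≤
        C * √ε := by
  set M := (|a| + |b|) * K
  refine ⟨B * (1 + M + M ^ 2 + (|a| + |b|) * L) *
    ∫ w, |w| ^ 3 * Real.exp (M * |w|) ∂gaussianReal 0 1, fun e he ε hε hε₁ x ↦ ?_⟩
  have hK : 0 ≤ K := (norm_nonneg _).trans (hbd 0)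
  have hf₂ : ContDiff ℝ 2 f := hf.of_le (by norm_num)
  have hfB {n : ℕ} (hn : n ∈ Finset.Icc 1 3) (t : ℝ) :
      |iteratedFDeriv ℝ n f (x + t • e) fun _ ↦ e| ≤ B :=
    norm_iteratedFDeriv_apply_const_le he (hB n hn _)
  have huK (t : ℝ) : |fderiv ℝ U (x + t • e) e| ≤ K := by
    simpa [he] using (fderiv ℝ U (x + t • e)).le_of_opNorm_le (hbd _) e
  have huL (t : ℝ) : |fderiv ℝ U (x + t • e) e - fderiv ℝ U (x + (0 : ℝ) • e) e| ≤ L * |t| := by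
    simpa [he, norm_smul] using
      (fderiv ℝ U (x + t • e) - fderiv ℝ U (x + (0 : ℝ) • e)).le_of_opNorm_le
        (hlip.norm_sub_le _ _) e
  have hexp := abs_sub_mul_exp_logRate_sub_le a b (g := fun t : ℝ ↦ f (x + t • e))
    (fun t ↦ by
      simpa using hasDerivAt_iteratedFDeriv_comp_add_smul (n := 0) (hf.of_le (by norm_num)) x e t)
    (hasDerivAt_iteratedFDeriv_comp_add_smul (n := 1) hf₂ x e)
    (hasDerivAt_comp_add_smul hU x e) (hfB (by decide)) (hfB (by decide))
    (norm_sub_le_mul_abs_of_norm_deriv_le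
      (hasDerivAt_iteratedFDeriv_comp_add_smul (n := 2) hf x e) (hfB (by decide))) huK huL
  have hcont := hf.continuous
  have hUcont := hU.continuous
  have hrate := continuous_logRate a b
  rw [directionalJumpGenerator, directionalDiffusionGenerator,
    fderiv_fderiv_apply_eq_iteratedFDeriv_two hf₂]
  exact abs_one_div_mul_integral_gaussDensity_sub_le (by fun_prop) (by positivity)
    (by simpa using hexp) hε hε₁

end Directional

variable {d : ℕ}

/-- Rescaled generator of the jump process on `ℝ^d` that moves along a uniformly chosen coordinate,
with Gaussian proposals of variance `ε` and acceptance rate `exp ∘ logRate a b`. -/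
noncomputable def jumpGenerator (a b : ℝ) (U f : EuclideanSpace ℝ (Fin d) → ℝ) (ε : ℝ)
    (x : EuclideanSpace ℝ (Fin d)) : ℝ :=
  1 / (d * ε) * ∑ i : Fin d, ∫ z : ℝ, (f (x + z • EuclideanSpace.single i (1 : ℝ)) - f x) *
    Real.exp (logRate a b (U (x + z • EuclideanSpace.single i (1 : ℝ)) - U x)) * gaussDensity ε z

/-- Generator of `dX = (a / d) ∇U(X) dt + d^{-1/2} dW` on `ℝ^d`; the Langevin diffusion at
temperature `T` is the case `a = -1 / (2T)`. -/
noncomputable def langevinGenerator (a : ℝ) (U f : EuclideanSpace ℝ (Fin d) → ℝ)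
    (x : EuclideanSpace ℝ (Fin d)) : ℝ :=
  a / d * ∑ i : Fin d, fderiv ℝ U x (EuclideanSpace.single i (1 : ℝ)) *
      fderiv ℝ f x (EuclideanSpace.single i (1 : ℝ)) +
    1 / (2 * d) * ∑ i : Fin d, fderiv ℝ (fun y ↦ fderiv ℝ f y (EuclideanSpace.single i (1 : ℝ))) x
      (EuclideanSpace.single i (1 : ℝ))

lemma jumpGenerator_sub_langevinGenerator_eq (a b : ℝ) (U f : EuclideanSpace ℝ (Fin d) → ℝ)
    (ε : ℝ) (x : EuclideanSpace ℝ (Fin d)) :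
    jumpGenerator a b U f ε x - langevinGenerator a U f x = 1 / d * ∑ i : Fin d,
      (directionalJumpGenerator a b U f ε (EuclideanSpace.single i 1) x -
        directionalDiffusionGenerator a U f (EuclideanSpace.single i 1) x) := by
  simp only [jumpGenerator, langevinGenerator, directionalJumpGenerator,
    directionalDiffusionGenerator, Finset.mul_sum, ← Finset.sum_add_distrib,
    ← Finset.sum_sub_distrib]
  refine Finset.sum_congr rfl fun i _ ↦ ?_
  ring

theorem exists_abs_jumpGenerator_sub_langevinGenerator_le (hd : 0 < d) (a b : ℝ)
    {U : EuclideanSpace ℝ (Fin d) → ℝ} (hU : Differentiable ℝ U) {K : ℝ}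
    (hbd : ∀ x, ‖fderiv ℝ U x‖ ≤ K) {L : NNReal} (hlip : LipschitzWith L (fderiv ℝ U))
    {f : EuclideanSpace ℝ (Fin d) → ℝ} (hf : ContDiff ℝ 3 f) {B : ℝ}
    (hB : ∀ n ∈ Finset.Icc 1 3, ∀ x, ‖iteratedFDeriv ℝ n f x‖ ≤ B) :
    ∃ C, ∀ ε, 0 < ε → ε ≤ 1 → ∀ x,
      |jumpGenerator a b U f ε x - langevinGenerator a U f x| ≤ C * √ε := by
  obtain ⟨C, hC⟩ := exists_abs_directionalJumpGenerator_sub_le a b hU hbd hlip hf hB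
  refine ⟨C, fun ε hε hε₁ x ↦ ?_⟩
  have hd₀ : (0 : ℝ) < d := Nat.cast_pos.2 hd
  rw [jumpGenerator_sub_langevinGenerator_eq, abs_mul, abs_of_pos (one_div_pos.2 hd₀), one_div,
    inv_mul_le_iff₀ hd₀]
  calc |∑ i : Fin d, (directionalJumpGenerator a b U f ε (EuclideanSpace.single i 1) x -
        directionalDiffusionGenerator a U f (EuclideanSpace.single i 1) x)|
      ≤ ∑ _ : Fin d, C * √ε := (Finset.abs_sum_le_sum_abs _ _).trans
        (Finset.sum_le_sum fun i _ ↦ hC _ (by simp) ε hε hε₁ x)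
    _ = d * (C * √ε) := by simp

end Generators

lemma exists_pos_forall_lt_of_le_mul_sqrt {ι : Type*} {F : ℝ → ι → ℝ} {C : ℝ}
    (hF : ∀ ε, 0 < ε → ε ≤ 1 → ∀ x, F ε x ≤ C * √ε) :
    ∀ δ > (0 : ℝ), ∃ ε₀ > (0 : ℝ), ∀ ε : ℝ, 0 < ε → ε < ε₀ → ∀ x, F ε x < δ := by
  intro δ hδ
  have hlim : Filter.Tendsto (fun ε ↦ C * √ε) (nhds 0) (nhds 0) := by
    simpa using (Real.continuous_sqrt.const_mul C).tendsto 0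
  obtain ⟨ρ, hρ, hsmall⟩ := Metric.eventually_nhds_iff.1 (hlim.eventually_lt_const hδ)
  refine ⟨min ρ 1, by positivity, fun ε hε hlt x ↦ (hF ε hε ?_ x).trans_lt (hsmall ?_)⟩
  · exact hlt.le.trans (min_le_right _ _)
  · simpa [abs_of_pos hε] using hlt.trans_le (min_le_left _ _)

theorem mh_convex_generator_converges_to_langevin_general {d : ℕ} (hd : 0 < d) (a b₁ b₂ α : ℝ)
    {U : EuclideanSpace ℝ (Fin d) → ℝ} (hU : Differentiable ℝ U) {K : ℝ}
    (hbd : ∀ x, ‖fderiv ℝ U x‖ ≤ K) {L : NNReal} (hlip : LipschitzWith L (fderiv ℝ U))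
    {f : EuclideanSpace ℝ (Fin d) → ℝ} (hf : ContDiff ℝ 3 f) {B : ℝ}
    (hB : ∀ n ∈ Finset.Icc 1 3, ∀ x, ‖iteratedFDeriv ℝ n f x‖ ≤ B) :
    ∃ C, ∀ ε, 0 < ε → ε ≤ 1 → ∀ x,
      |α * jumpGenerator a b₁ U f ε x + (1 - α) * jumpGenerator a b₂ U f ε x -
        langevinGenerator a U f x| ≤ C * √ε := by
  obtain ⟨C₁, hC₁⟩ := exists_abs_jumpGenerator_sub_langevinGenerator_le hd a b₁ hU hbd hlip hf hB
  obtain ⟨C₂, hC₂⟩ := exists_abs_jumpGenerator_sub_langevinGenerator_le hd a b₂ hU hbd hlip hf hB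
  refine ⟨|α| * C₁ + |1 - α| * C₂, fun ε hε hε₁ x ↦ ?_⟩
  set G := langevinGenerator a U f x
  calc |α * jumpGenerator a b₁ U f ε x + (1 - α) * jumpGenerator a b₂ U f ε x - G|
      = |α * (jumpGenerator a b₁ U f ε x - G) + (1 - α) * (jumpGenerator a b₂ U f ε x - G)| := by
        congr 1
        ring
    _ ≤ |α| * |jumpGenerator a b₁ U f ε x - G| + |1 - α| * |jumpGenerator a b₂ U f ε x - G| := by
        rw [← abs_mul, ← abs_mul]
        exact abs_add_le _ _
    _ ≤ |α| * (C₁ * √ε) + |1 - α| * (C₂ * √ε) := by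
        gcongr
        exacts [hC₁ ε hε hε₁ x, hC₂ ε hε hε₁ x]
    _ = (|α| * C₁ + |1 - α| * C₂) * √ε := by ring

/-- For every `α ∈ [0,1]`, the rescaled generator `α L₁^ε + (1−α) L₂^ε` of the convex
combination of the two Metropolis-Hastings processes converges, uniformly in `x`, to the
generator of the time-rescaled Langevin diffusion
`dX(t) = −∇U(X(t))/(2Td) dt + d^{−1/2} dW(t)` for every smooth compactly supported `f`. -/
theorem mh_convex_generator_converges_to_langevin {d : ℕ} (hd : 0 < d) (T : ℝ) (hT : 0 < T)
    (α : ℝ) (hα : α ∈ Set.Icc (0:ℝ) 1)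
    (U : EuclideanSpace ℝ (Fin d) → ℝ) (hU : ContDiff ℝ 1 U)
    (K : ℝ) (hbd : ∀ x, ‖fderiv ℝ U x‖ ≤ K)
    (L : NNReal) (hlip : LipschitzWith L (fderiv ℝ U))
    (f : EuclideanSpace ℝ (Fin d) → ℝ) (hf : ContDiff ℝ (⊤ : ℕ∞) f) (hsupp : HasCompactSupport f) :
    ∀ δ > (0:ℝ), ∃ ε₀ > (0:ℝ), ∀ ε : ℝ, 0 < ε → ε < ε₀ →
      ∀ x : EuclideanSpace ℝ (Fin d),
        |α * ((1 / ((d : ℝ) * ε)) * ∑ i : Fin d, ∫ z : ℝ,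
                (f (x + z • EuclideanSpace.single i (1:ℝ)) - f x) *
                  Real.exp (-(max (U (x + z • EuclideanSpace.single i (1:ℝ)) - U x) 0) / T) *
                  gaussDensity ε z)
          + (1 - α) * ((1 / ((d : ℝ) * ε)) * ∑ i : Fin d, ∫ z : ℝ,
                (f (x + z • EuclideanSpace.single i (1:ℝ)) - f x) *
                  Real.exp (max (U x - U (x + z • EuclideanSpace.single i (1:ℝ))) 0 / T) *
                  gaussDensity ε z)
          - (-(1 / (2 * T * (d : ℝ))) * ∑ i : Fin d,
                fderiv ℝ U x (EuclideanSpace.single i (1:ℝ)) *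
                  fderiv ℝ f x (EuclideanSpace.single i (1:ℝ))
              + (1 / (2 * (d : ℝ))) * ∑ i : Fin d,
                  fderiv ℝ (fun y => fderiv ℝ f y (EuclideanSpace.single i (1:ℝ))) x
                    (EuclideanSpace.single i (1:ℝ)))|
          < δ := by
  have hf₃ : ContDiff ℝ 3 f := contDiff_infty.1 hf 3
  obtain ⟨B, hB⟩ := exists_norm_iteratedFDeriv_le_of_hasCompactSupport (m := 3) hf₃ hsupp
  obtain ⟨C, hC⟩ := mh_convex_generator_converges_to_langevin_general hd (-(1 / (2 * T)))
    (-(1 / (2 * T))) (1 / (2 * T)) α (hU.differentiable one_ne_zero) hbd hlip hf₃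
    fun n hn ↦ hB n (Finset.mem_Icc.1 hn).2
  have hdrift : -(1 / (2 * T)) / (d : ℝ) = -(1 / (2 * T * d)) := by rw [neg_div, div_div]
  simpa only [jumpGenerator, langevinGenerator, logRate_metropolis_first,
    logRate_metropolis_second, hdrift] using exists_pos_forall_lt_of_le_mul_sqrt hC
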